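/- arXiv:2204.06686 — 2 statements merged into one kernel-verified Lean document; each statement's English description precedes it below -/
import Mathlib

section
/- There exists an absolute constant c > 0 such that for all n ∈ ℕ and all functions f : {0,1}^n → {0,1} with var(f) > 0, E_x[√(s_f(x))] ≥ c · var(f) · √(log(1/var(f))). -/
open Finset

noncomputable section

/-- Expectation over the uniform distribution on `{0,1}^n`. -/
def hcExp (n : ℕ) (g : (Fin n → Bool) → ℝ) : ℝ :=
  (∑ x : Fin n → Bool, g x) / 2 ^ n

/-- Flip the `i`-th coordinate of `x`. -/
def hcFlip {n : ℕ} (x : Fin n → Bool) (i : Fin n) : Fin n → Bool :=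
  Function.update x i (!(x i))

/-- Sensitivity of `f` at `x`. -/
def sens {n : ℕ} (f : (Fin n → Bool) → Bool) (x : Fin n → Bool) : ℕ :=
  (Finset.univ.filter fun i => f (hcFlip x i) ≠ f x).card

/-- `f` with values in `{0,1} ⊆ ℝ`. -/
def toReal {n : ℕ} (f : (Fin n → Bool) → Bool) : (Fin n → Bool) → ℝ :=
  fun x => if f x then 1 else 0

/-- Variance of a Boolean function. -/
def hcVar (n : ℕ) (f : (Fin n → Bool) → Bool) : ℝ :=
  hcExp n (toReal f) - (hcExp n (toReal f)) ^ 2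

/-- Influence of coordinate `i`. -/
def influence (n : ℕ) (f : (Fin n → Bool) → Bool) (i : Fin n) : ℝ :=
  hcExp n (fun x => if f (hcFlip x i) = f x then 0 else 1)

/-- Fourier character. -/
def chi {n : ℕ} (S : Finset (Fin n)) (x : Fin n → Bool) : ℝ :=
  ∏ i ∈ S, (if x i then (-1 : ℝ) else 1)

/-- Fourier coefficient of `g` at `S`. -/
def fcoef (n : ℕ) (g : (Fin n → Bool) → ℝ) (S : Finset (Fin n)) : ℝ :=
  hcExp n (fun x => g x * chi S x)

/-- Derivative of `g` along coordinate `i`. -/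
def derivOn {n : ℕ} (g : (Fin n → Bool) → ℝ) (i : Fin n) (x : Fin n → Bool) : ℝ :=
  g (Function.update x i false) - g (Function.update x i true)

/-- Euclidean norm of the gradient of `g` at `x`. -/
def gradNorm2 {n : ℕ} (g : (Fin n → Bool) → ℝ) (x : Fin n → Bool) : ℝ :=
  Real.sqrt (∑ i, (derivOn g i x) ^ 2)

/-- `ℓ_p` norm of the gradient of `g` at `x`. -/
def gradNormP {n : ℕ} (p : ℝ) (g : (Fin n → Bool) → ℝ) (x : Fin n → Bool) : ℝ :=
  (∑ i, |derivOn g i x| ^ p) ^ (1 / p)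

/-- Fourier weight at exactly level `d`. -/
def wEq (n : ℕ) (g : (Fin n → Bool) → ℝ) (d : ℕ) : ℝ :=
  ∑ S ∈ Finset.univ.filter (fun S : Finset (Fin n) => S.card = d), (fcoef n g S) ^ 2

/-- Approximate level-`d` Fourier weight: levels in `[d, 2d)`. -/
def wApprox (n : ℕ) (g : (Fin n → Bool) → ℝ) (d : ℕ) : ℝ :=
  ∑ S ∈ Finset.univ.filter (fun S : Finset (Fin n) => d ≤ S.card ∧ S.card < 2 * d),
    (fcoef n g S) ^ 2

/-- Fourier weight at levels `≥ d`. -/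
def wGe (n : ℕ) (g : (Fin n → Bool) → ℝ) (d : ℕ) : ℝ :=
  ∑ S ∈ Finset.univ.filter (fun S : Finset (Fin n) => d ≤ S.card), (fcoef n g S) ^ 2


def tEll (p : ℝ) : ℝ := Real.sqrt (1 - Real.log p)

def tK (p : ℝ) : ℝ := p * tEll p - p

lemma tell_ge_one {p : ℝ} (h0 : 0 ≤ p) (h1 : p ≤ 1) : 1 ≤ tEll p := by
  unfold tEll
  rw [Real.one_le_sqrt]
  have := Real.log_nonpos h0 h1
  linarith

lemma tell_sq {p : ℝ} (h0 : 0 ≤ p) (h1 : p ≤ 1) : tEll p ^ 2 = 1 - Real.log p := by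
  unfold tEll
  rw [Real.sq_sqrt]
  have := Real.log_nonpos h0 h1
  linarith

lemma tK_nonneg {p : ℝ} (h0 : 0 ≤ p) (h1 : p ≤ 1) : 0 ≤ tK p := by
  have := tell_ge_one h0 h1
  unfold tK
  nlinarith

/-- difference estimate -/
lemma tell_diff {p q : ℝ} (h0 : 0 < p) (h1 : p ≤ 1) (h0' : 0 < q) (h1' : q ≤ 1) :
    p * (tEll p - tEll q) ≤ (q - p) / (tEll p + tEll q) := by
  have hp := tell_ge_one h0.le h1
  have hq := tell_ge_one h0'.le h1'
  have e1 := tell_sq h0.le h1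
  have e2 := tell_sq h0'.le h1'
  rw [le_div_iff₀ (by linarith)]
  have h : Real.log (q / p) ≤ q / p - 1 := Real.log_le_sub_one_of_pos (by positivity)
  rw [Real.log_div h0'.ne' h0.ne'] at h
  have h2 : p * (Real.log q - Real.log p) ≤ p * (q / p - 1) := mul_le_mul_of_nonneg_left h h0.le
  have h3 : p * (q / p - 1) = q - p := by field_simp
  have h4 : p * (tEll p - tEll q) * (tEll p + tEll q) = p * (tEll p ^ 2 - tEll q ^ 2) := by ring
  rw [h4, e1, e2]
  linarith

lemma two_point_aux {a b : ℝ} (ha : 0 ≤ a) (hab : a ≤ b) (hb : b ≤ 1) :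
    ((a + b) / 2) * tEll ((a + b) / 2) *
      (2 * (((a + b) / 2) * tEll ((a + b) / 2)) - a * tEll a - b * tEll b)
      ≤ 4 * ((b - a) / 2) ^ 2 := by
  rcases eq_or_lt_of_le (ha.trans hab) with hb0 | hb0
  · have : a = 0 := by linarith
    subst this; subst hb0; simp
  obtain ⟨m, hm⟩ : ∃ m, m = (a + b) / 2 := ⟨_, rfl⟩
  obtain ⟨t, ht⟩ : ∃ t, t = (b - a) / 2 := ⟨_, rfl⟩
  have hbm : b = m + t := by rw [hm, ht]; ring
  have ham : a = m - t := by rw [hm, ht]; ring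
  rw [← hm, ← ht]
  have hm0 : 0 < m := by linarith
  have hm1 : m ≤ 1 := by linarith
  have ht0 : 0 ≤ t := by linarith
  have lm := tell_ge_one hm0.le hm1
  have lb := tell_ge_one hb0.le hb
  have la := tell_ge_one ha (hab.trans hb)
  have d1 := tell_diff hm0 hm1 hb0 hb
  have e : b - m = t := by linarith
  rw [e] at d1
  have key : m * tEll m * (2 * (m * tEll m) - a * tEll a - b * tEll b)
      = tEll m * (a * (m * (tEll m - tEll a)) + b * (m * (tEll m - tEll b))) := by
    rw [ham, hbm]; ring
  rw [key]
  rcases eq_or_lt_of_le ha with ha0 | ha0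
  · rw [← ha0, zero_mul, zero_add]
    have hb2 : b = 2 * t := by linarith
    have h1 : t / (tEll m + tEll b) * tEll m ≤ t := by
      rw [div_mul_eq_mul_div, div_le_iff₀ (by linarith)]; nlinarith
    calc tEll m * (b * (m * (tEll m - tEll b))) = (tEll m * b) * (m * (tEll m - tEll b)) := by ring
      _ ≤ (tEll m * b) * (t / (tEll m + tEll b)) := by gcongr
      _ = b * (t / (tEll m + tEll b) * tEll m) := by ring
      _ ≤ b * t := by gcongr
      _ ≤ 4 * t ^ 2 := by rw [hb2]; nlinarith
  · have d2 := tell_diff hm0 hm1 ha0 (hab.trans hb)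
    have d3 := tell_diff ha0 (hab.trans hb) hb0 hb
    have e2 : a - m = -t := by linarith
    have e3 : b - a = 2 * t := by linarith
    rw [e2] at d2
    rw [e3] at d3
    have h3 : a * (tEll a - tEll b) ≤ t := by
      refine d3.trans ?_
      rw [div_le_iff₀ (by linarith)]; nlinarith
    have P : 0 < tEll m + tEll a := by linarith
    have Q : 0 < tEll m + tEll b := by linarith
    calc tEll m * (a * (m * (tEll m - tEll a)) + b * (m * (tEll m - tEll b)))
        ≤ tEll m * (a * (-t / (tEll m + tEll a)) + b * (t / (tEll m + tEll b))) := by gcongr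
      _ = tEll m * t * (2 * t * (tEll m + tEll a) + a * (tEll a - tEll b)) /
            ((tEll m + tEll a) * (tEll m + tEll b)) := by
          field_simp
          rw [ham, hbm]; ring
      _ ≤ tEll m * t * (2 * t * (tEll m + tEll a) + t) /
            ((tEll m + tEll a) * (tEll m + tEll b)) := by gcongr
      _ ≤ 4 * t ^ 2 := by
          rw [div_le_iff₀ (by positivity)]
          have : tEll m * (2 * (tEll m + tEll a) + 1) ≤
            4 * ((tEll m + tEll a) * (tEll m + tEll b)) := by nlinarith
          calc _ = t ^ 2 * (tEll m * (2 * (tEll m + tEll a) + 1)) := by ring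
            _ ≤ t ^ 2 * (4 * ((tEll m + tEll a) * (tEll m + tEll b))) := by gcongr
            _ = _ := by ring

lemma two_point' {a b : ℝ} (ha : 0 ≤ a) (hab : a ≤ b) (hb : b ≤ 1) :
    tK ((a + b) / 2) ^ 2 ≤ ((tK a + tK b) / 2) ^ 2 + (a - b) ^ 2 := by
  have h := two_point_aux ha hab hb
  have ka := tK_nonneg ha (hab.trans hb)
  have kb := tK_nonneg (ha.trans hab) hb
  have hm0 : 0 ≤ (a + b) / 2 := by linarith
  have km := tK_nonneg hm0 (by linarith)
  have lin : 2 * (((a + b) / 2) * tEll ((a + b) / 2)) - a * tEll a - b * tEll b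
    = 2 * tK ((a + b) / 2) - tK a - tK b := by unfold tK; ring
  have kle : tK ((a + b) / 2) ≤ ((a + b) / 2) * tEll ((a + b) / 2) := by
    unfold tK; linarith
  rw [lin] at h
  by_cases hD : 2 * tK ((a + b) / 2) - tK a - tK b ≤ 0
  · nlinarith [sq_nonneg (a - b)]
  · push Not at hD
    have := mul_le_mul_of_nonneg_right kle hD.le
    nlinarith

lemma two_point {a b : ℝ} (ha : 0 ≤ a) (ha1 : a ≤ 1) (hb0 : 0 ≤ b) (hb : b ≤ 1) :
    tK ((a + b) / 2) ^ 2 ≤ ((tK a + tK b) / 2) ^ 2 + (a - b) ^ 2 := by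
  rcases le_total a b with h | h
  · exact two_point' ha h hb
  · have := two_point' hb0 h ha1
    rw [add_comm b a, add_comm (tK b)] at this
    nlinarith

lemma hcExp_succ (n : ℕ) (g : (Fin (n+1) → Bool) → ℝ) :
    hcExp (n+1) g = (hcExp n (fun x => g (Fin.cons true x))
      + hcExp n (fun x => g (Fin.cons false x))) / 2 := by
  unfold hcExp
  have : ∑ x, g x = ∑ x : Fin n → Bool, g (Fin.cons true x)
      + ∑ x : Fin n → Bool, g (Fin.cons false x) := by
    rw [← (Fin.consEquiv (fun _ => Bool)).sum_comp g, Fintype.sum_prod_type, Fintype.sum_bool]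
    rfl
  rw [this, pow_succ]
  field_simp

lemma hcExp_mono {n : ℕ} {g h : (Fin n → Bool) → ℝ} (H : ∀ x, g x ≤ h x) :
    hcExp n g ≤ hcExp n h := by
  unfold hcExp
  gcongr
  exact H _

lemma hcExp_const (n : ℕ) (c : ℝ) : hcExp n (fun _ => c) = c := by
  simp [hcExp]

lemma hcExp_lin {n : ℕ} (g h : (Fin n → Bool) → ℝ) (c d : ℝ) :
    hcExp n (fun x => c * g x + d * h x) = c * hcExp n g + d * hcExp n h := by
  unfold hcExp
  rw [Finset.sum_add_distrib, ← Finset.mul_sum, ← Finset.mul_sum]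
  ring

lemma cs2 (U D u d : ℝ) : U * u + D * d ≤ √(U ^ 2 + D ^ 2) * √(u ^ 2 + d ^ 2) := by
  rw [← Real.sqrt_mul (by positivity)]
  apply Real.le_sqrt_of_sq_le
  nlinarith [sq_nonneg (U * d - D * u)]

lemma mink {n : ℕ} (u d : (Fin n → Bool) → ℝ) :
    √((hcExp n u) ^ 2 + (hcExp n d) ^ 2) ≤ hcExp n (fun x => √(u x ^ 2 + d x ^ 2)) := by
  set U := hcExp n u
  set D := hcExp n d
  set R := √(U ^ 2 + D ^ 2) with hR
  have hR2 : R ^ 2 = U ^ 2 + D ^ 2 := Real.sq_sqrt (by positivity)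
  have h1 : U * U + D * D ≤ R * hcExp n (fun x => √(u x ^ 2 + d x ^ 2)) := by
    have e1 := hcExp_lin u d U D
    have e2 := hcExp_lin (fun x => √(u x ^ 2 + d x ^ 2)) (fun _ => 0) R 0
    have h := hcExp_mono (n := n) (g := fun x => U * u x + D * d x)
      (h := fun x => R * √(u x ^ 2 + d x ^ 2) + 0 * 0)
      (fun x => by simpa using cs2 U D (u x) (d x))
    rw [e1, e2] at h
    simpa using h
  rcases (Real.sqrt_nonneg (U ^ 2 + D ^ 2)).eq_or_lt with h | h
  · rw [← hR] at h
    rw [← h]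
    rw [← hcExp_const n 0]
    exact hcExp_mono (fun x => Real.sqrt_nonneg _)
  · rw [← hR] at h
    refine le_of_mul_le_mul_left ?_ h
    nlinarith

lemma mean_nonneg {n : ℕ} (f : (Fin n → Bool) → Bool) : 0 ≤ hcExp n (toReal f) := by
  rw [← hcExp_const n 0]
  refine hcExp_mono fun x => ?_
  unfold toReal; split_ifs <;> norm_num

lemma mean_le_one {n : ℕ} (f : (Fin n → Bool) → Bool) : hcExp n (toReal f) ≤ 1 := by
  rw [← hcExp_const n 1]
  refine hcExp_mono fun x => ?_
  unfold toReal; split_ifs <;> norm_num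

lemma sens_cons {n : ℕ} (f : (Fin (n+1) → Bool) → Bool) (b : Bool) (x : Fin n → Bool) :
    (sens f (Fin.cons b x) : ℝ) = sens (fun y => f (Fin.cons b y)) x
      + (if f (Fin.cons true x) ≠ f (Fin.cons false x) then 1 else 0) := by
  have : sens f (Fin.cons b x) = sens (fun y => f (Fin.cons b y)) x
      + (if f (Fin.cons true x) ≠ f (Fin.cons false x) then 1 else 0) := by
    unfold sens
    rw [Finset.card_filter, Finset.card_filter, Fin.sum_univ_succ, add_comm]
    congr 1
    · simp only [hcFlip, Fin.cons_succ, Fin.cons_update]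
    · simp only [hcFlip, Fin.cons_zero, Fin.update_cons_zero]
      cases b <;> simp [eq_comm]
  rw [this]; push_cast; rfl

lemma main_ind (n : ℕ) : ∀ f : (Fin n → Bool) → Bool,
    tK (hcExp n (toReal f)) ≤ hcExp n (fun x => Real.sqrt (sens f x)) := by
  induction n with
  | zero =>
    intro f
    have h : tK (hcExp 0 (toReal f)) = 0 := by
      have : hcExp 0 (toReal f) = 0 ∨ hcExp 0 (toReal f) = 1 := by
        have e : hcExp 0 (toReal f) = toReal f default := by
          unfold hcExp
          rw [Fintype.sum_unique, pow_zero, div_one]; exact congrArg _ (Subsingleton.elim _ _)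
        rw [e]
        unfold toReal
        split_ifs <;> simp
      rcases this with h | h <;> rw [h] <;> simp [tK, tEll]
    rw [h, ← hcExp_const 0 0]
    exact hcExp_mono (fun x => Real.sqrt_nonneg _)
  | succ n ih =>
    intro f
    set d : (Fin n → Bool) → ℝ := fun x =>
      if f (Fin.cons true x) ≠ f (Fin.cons false x) then 1 else 0 with hd
    set p : Bool → ℝ := fun b => hcExp n (toReal fun y => f (Fin.cons b y)) with hp
    set S : Bool → ℝ := fun b => hcExp n (fun x => √(sens (fun y => f (Fin.cons b y)) x)) with hS
    have d01 : ∀ x, d x ^ 2 = d x := by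
      intro x; simp only [hd]; split_ifs <;> norm_num
    have step : ∀ b, √(S b ^ 2 + hcExp n d ^ 2)
        ≤ hcExp n (fun x => √(sens f (Fin.cons b x))) := by
      intro b
      refine (mink _ d).trans (le_of_eq ?_)
      congr 1
      funext x
      rw [sens_cons, Real.sq_sqrt (Nat.cast_nonneg _), d01]
    have hpE : hcExp (n+1) (toReal f) = (p true + p false) / 2 := by
      rw [hcExp_succ]; rfl
    have hD : |p true - p false| ≤ hcExp n d := by
      rw [abs_le]
      have e := hcExp_lin (toReal fun y => f (Fin.cons true y))
        (toReal fun y => f (Fin.cons false y)) 1 (-1)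
      have e' := hcExp_lin (toReal fun y => f (Fin.cons true y))
        (toReal fun y => f (Fin.cons false y)) (-1) 1
      have h1 := hcExp_mono (n := n) (g := fun x => 1 * toReal (fun y => f (Fin.cons true y)) x
        + (-1) * toReal (fun y => f (Fin.cons false y)) x) (h := d) (fun x => by
          simp only [hd, toReal]
          by_cases h1 : f (Fin.cons true x) = true <;> by_cases h2 : f (Fin.cons false x) = true <;>
            simp [h1, h2])
      have h2 := hcExp_mono (n := n) (g := fun x => (-1) * toReal (fun y => f (Fin.cons true y)) x
        + 1 * toReal (fun y => f (Fin.cons false y)) x) (h := d) (fun x => by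
          simp only [hd, toReal]
          by_cases h1 : f (Fin.cons true x) = true <;> by_cases h2 : f (Fin.cons false x) = true <;>
            simp [h1, h2])
      rw [e] at h1
      rw [e'] at h2
      constructor <;> simp only [hp] <;> linarith
    have p0 : ∀ b, 0 ≤ p b := fun b => mean_nonneg _
    have p1 : ∀ b, p b ≤ 1 := fun b => mean_le_one _
    have tp := two_point (p0 true) (p1 true) (p0 false) (p1 false)
    have k0 : ∀ b, 0 ≤ tK (p b) := fun b => tK_nonneg (p0 b) (p1 b)
    have kS : ∀ b, tK (p b) ≤ S b := fun b => ih _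
    have hDsq : (p true - p false) ^ 2 ≤ hcExp n d ^ 2 := sq_le_sq' (by
      have := (abs_le.1 hD).1; linarith) (abs_le.1 hD).2
    have st := step true
    have sf := step false
    rw [hpE, hcExp_succ]
    have hA : tK ((p true + p false) / 2) ≤
        (√(S true ^ 2 + hcExp n d ^ 2) + √(S false ^ 2 + hcExp n d ^ 2)) / 2 := by
      set A := √(S true ^ 2 + hcExp n d ^ 2) with hA
      set B := √(S false ^ 2 + hcExp n d ^ 2) with hB
      have A2 : A ^ 2 = S true ^ 2 + hcExp n d ^ 2 := Real.sq_sqrt (by positivity)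
      have B2 : B ^ 2 = S false ^ 2 + hcExp n d ^ 2 := Real.sq_sqrt (by positivity)
      have AB : S true * S false + hcExp n d * hcExp n d ≤ A * B := cs2 _ _ _ _
      refine (abs_le_of_sq_le_sq' ?_ (by positivity)).2
      have hS2 : ((tK (p true) + tK (p false)) / 2) ^ 2 ≤ ((S true + S false) / 2) ^ 2 := by
        have := k0 true; have := k0 false; have := kS true; have := kS false
        gcongr <;> assumption
      nlinarith
    linarith

lemma final_bound {p : ℝ} (h0 : 0 < p) (h1 : p ≤ 1 / 2) :
    1 / 8 * (p - p ^ 2) * √(Real.log (1 / (p - p ^ 2))) ≤ tK p := by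
  have hv : p / 2 ≤ p - p ^ 2 := by nlinarith
  have hv' : p - p ^ 2 ≤ p := by nlinarith
  have hvp : 0 < p - p ^ 2 := by linarith
  set L := -Real.log p with hL
  have hlog2 := Real.log_two_gt_d9
  have hLb : Real.log 2 ≤ L := by
    have : Real.log p ≤ Real.log (1 / 2) := Real.log_le_log h0 h1
    rw [one_div, Real.log_inv] at this
    linarith
  have hlog : Real.log (1 / (p - p ^ 2)) ≤ 2 ^ 2 * L := by
    have : Real.log (p / 2) ≤ Real.log (p - p ^ 2) := Real.log_le_log (by linarith) hv
    rw [Real.log_div h0.ne' (by norm_num)] at this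
    rw [one_div, Real.log_inv]
    linarith
  have hs : √(Real.log (1 / (p - p ^ 2))) ≤ 2 * √L := by
    refine (Real.sqrt_le_sqrt hlog).trans ?_
    rw [Real.sqrt_mul (by norm_num), Real.sqrt_sq (by norm_num)]
  have hs0 := Real.sqrt_nonneg L
  have hsq : √L ^ 2 = L := Real.sq_sqrt (by linarith)
  have hsl : 8 / 15 ≤ √L := Real.le_sqrt_of_sq_le (by norm_num; linarith)
  have ht : 1 + √L / 4 ≤ tEll p := by
    unfold tEll
    apply Real.le_sqrt_of_sq_le
    nlinarith
  calc 1 / 8 * (p - p ^ 2) * √(Real.log (1 / (p - p ^ 2)))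
      ≤ 1 / 8 * p * (2 * √L) := by gcongr
    _ = p * (√L / 4) := by ring
    _ ≤ p * (tEll p - 1) := by gcongr; linarith
    _ = tK p := by unfold tK; ring

theorem talagrand_isoperimetry :
    ∃ c : ℝ, 0 < c ∧ ∀ (n : ℕ) (f : (Fin n → Bool) → Bool), 0 < hcVar n f →
      hcExp n (fun x => Real.sqrt (sens f x)) ≥
        c * hcVar n f * Real.sqrt (Real.log (1 / hcVar n f)) := by
  refine ⟨1 / 8, by norm_num, fun n f hv => ?_⟩
  rw [ge_iff_le]
  have key : ∀ g : (Fin n → Bool) → Bool, 0 < hcVar n g → hcExp n (toReal g) ≤ 1 / 2 →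
      1 / 8 * hcVar n g * Real.sqrt (Real.log (1 / hcVar n g)) ≤
        hcExp n (fun x => Real.sqrt (sens g x)) := by
    intro g hg hh
    refine le_trans ?_ (main_ind n g)
    unfold hcVar at hg ⊢
    refine final_bound ?_ hh
    nlinarith [sq_nonneg (hcExp n (toReal g))]
  rcases le_total (hcExp n (toReal f)) (1 / 2) with h | h
  · exact key f hv h
  · have e : hcExp n (toReal fun x => !(f x)) = 1 - hcExp n (toReal f) := by
      have e1 := hcExp_lin (fun _ => 1) (toReal f) 1 (-1)
      rw [hcExp_const] at e1
      rw [show (toReal fun x => !(f x)) = fun x => 1 * 1 + (-1) * toReal f x from ?_, e1]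
      · ring
      · funext x; simp only [toReal]; by_cases h : f x = true <;> simp [h]
    have ev : hcVar n (fun x => !(f x)) = hcVar n f := by
      unfold hcVar; rw [e]; ring
    have es : ∀ x, sens (fun x => !(f x)) x = sens f x := by
      intro x; simp [sens]
    have := key (fun x => !(f x)) (by rw [ev]; exact hv) (by rw [e]; linarith)
    simp only [ev, es] at this
    exact this

end
end

section
/- There exists an absolute constant c > 0 such that for all n ∈ ℕ and all functions f : {0,1}^n → {0,1} with var(f) > 0, E_x[√(s_f(x))] ≥ c · var(f) · √(log(1 + 1/(Σ_{i=1}^n I_i[f]²))). -/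
open Finset

noncomputable section

def sg (b : Bool) : ℝ := if b then -1 else 1

lemma sg_sq (b : Bool) : sg b * sg b = 1 := by cases b <;> simp [sg]

lemma sg_not (b : Bool) : sg (!b) = - sg b := by cases b <;> simp [sg]

lemma chi_eq {n : ℕ} (S : Finset (Fin n)) (x : Fin n → Bool) : chi S x = ∏ i ∈ S, sg (x i) := rfl

lemma E_add {n : ℕ} (f g : (Fin n → Bool) → ℝ) :
    hcExp n (fun x => f x + g x) = hcExp n f + hcExp n g := by
  simp only [hcExp, Finset.sum_add_distrib, add_div]

lemma E_sub {n : ℕ} (f g : (Fin n → Bool) → ℝ) :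
    hcExp n (fun x => f x - g x) = hcExp n f - hcExp n g := by
  simp only [hcExp, Finset.sum_sub_distrib, sub_div]

lemma E_mul {n : ℕ} (c : ℝ) (g : (Fin n → Bool) → ℝ) :
    hcExp n (fun x => c * g x) = c * hcExp n g := by
  simp only [hcExp, ← Finset.mul_sum, mul_div_assoc]

lemma E_mulr {n : ℕ} (c : ℝ) (g : (Fin n → Bool) → ℝ) :
    hcExp n (fun x => g x * c) = hcExp n g * c := by
  simp only [mul_comm _ c, E_mul]

lemma E_sum {n : ℕ} {ι : Type*} (s : Finset ι) (g : ι → (Fin n → Bool) → ℝ) :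
    hcExp n (fun x => ∑ i ∈ s, g i x) = ∑ i ∈ s, hcExp n (g i) := by
  simp only [hcExp]
  rw [Finset.sum_comm, Finset.sum_div]

lemma E_const {n : ℕ} (c : ℝ) : hcExp n (fun _ => c) = c := by
  simp [hcExp]

lemma E_mono {n : ℕ} {f g : (Fin n → Bool) → ℝ} (h : ∀ x, f x ≤ g x) :
    hcExp n f ≤ hcExp n g := by
  unfold hcExp
  gcongr with x
  exact h x

lemma E_nonneg {n : ℕ} {f : (Fin n → Bool) → ℝ} (h : ∀ x, 0 ≤ f x) :
    0 ≤ hcExp n f := by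
  unfold hcExp
  exact div_nonneg (Finset.sum_nonneg fun x _ => h x) (by positivity)

lemma E_abs {n : ℕ} (f : (Fin n → Bool) → ℝ) :
    |hcExp n f| ≤ hcExp n (fun x => |f x|) := by
  unfold hcExp
  rw [abs_div, abs_of_pos (by positivity : (0:ℝ) < 2 ^ n)]
  gcongr
  exact Finset.abs_sum_le_sum_abs _ _

lemma E_comm {n : ℕ} (g : (Fin n → Bool) → (Fin n → Bool) → ℝ) :
    hcExp n (fun x => hcExp n (fun y => g x y)) = hcExp n (fun y => hcExp n (fun x => g x y)) := by
  simp only [hcExp, ← Finset.sum_div]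
  rw [Finset.sum_comm]

lemma hcflip_flip {n : ℕ} (x : Fin n → Bool) (i : Fin n) : hcFlip (hcFlip x i) i = x := by
  simp [hcFlip]

lemma flip_same {n : ℕ} (x : Fin n → Bool) (i : Fin n) : hcFlip x i i = !(x i) := by
  simp [hcFlip]

lemma flip_ne {n : ℕ} (x : Fin n → Bool) {i j : Fin n} (h : j ≠ i) : hcFlip x i j = x j := by
  simp [hcFlip, h]

lemma E_flip {n : ℕ} (i : Fin n) (g : (Fin n → Bool) → ℝ) :
    hcExp n (fun x => g (hcFlip x i)) = hcExp n g := by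
  unfold hcExp
  congr 1
  exact Equiv.sum_comp (⟨fun x => hcFlip x i, fun x => hcFlip x i, fun x => hcflip_flip x i,
    fun x => hcflip_flip x i⟩ : (Fin n → Bool) ≃ (Fin n → Bool)) g

lemma E_cs {n : ℕ} (u v : (Fin n → Bool) → ℝ) :
    (hcExp n (fun x => u x * v x)) ^ 2 ≤ hcExp n (fun x => u x ^ 2) * hcExp n (fun x => v x ^ 2) := by
  unfold hcExp
  rw [div_pow, div_mul_div_comm, ← sq]
  gcongr
  exact Finset.sum_mul_sq_le_sq_mul_sq _ _ _

lemma E_prod {n : ℕ} (h : Fin n → Bool → ℝ) :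
    hcExp n (fun x => ∏ i, h i (x i)) = ∏ i, ((h i true + h i false) / 2) := by
  unfold hcExp
  rw [Finset.prod_div_distrib]
  simp only [Finset.prod_const, Finset.card_univ, Fintype.card_fin]
  congr 1
  have := Finset.prod_univ_sum (fun _ : Fin n => (Finset.univ : Finset Bool)) h
  simp only [Fintype.univ_bool, Finset.sum_pair (show true ≠ false by decide)] at this
  rw [this]
  simp [← Fintype.univ_bool]

def ker {n : ℕ} (r : Fin n → ℝ) (x y : Fin n → Bool) : ℝ :=
  ∏ i, (1 + r i * (sg (x i) * sg (y i)))

lemma ker_comm {n : ℕ} (r : Fin n → ℝ) (x y : Fin n → Bool) : ker r x y = ker r y x := by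
  simp only [ker, mul_comm (sg (x _))]

lemma ker_eq {n : ℕ} (r : Fin n → ℝ) (x y : Fin n → Bool) :
    ker r x y = ∑ S : Finset (Fin n), (∏ i ∈ S, r i) * (chi S x * chi S y) := by
  simp only [ker, Finset.prod_one_add, Finset.powerset_univ, chi_eq, Finset.prod_mul_distrib]

lemma ker_nonneg {n : ℕ} {r : Fin n → ℝ} (h0 : ∀ i, 0 ≤ r i) (h1 : ∀ i, r i ≤ 1)
    (x y : Fin n → Bool) : 0 ≤ ker r x y := by
  refine Finset.prod_nonneg fun i _ => ?_
  have := h0 i; have := h1 i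
  cases x i <;> cases y i <;> simp [sg] <;> linarith

lemma E_ker {n : ℕ} (r : Fin n → ℝ) (y : Fin n → Bool) :
    hcExp n (fun x => ker r x y) = 1 := by
  unfold ker
  rw [E_prod (fun i b => 1 + r i * (sg b * sg (y i)))]
  refine Finset.prod_eq_one fun i _ => ?_
  simp only [sg]
  cases y i <;> simp <;> ring

lemma ker_one {n : ℕ} (x y : Fin n → Bool) :
    ker (fun _ => 1) x y = if y = x then 2 ^ n else 0 := by
  split_ifs with h
  · subst h
    simp only [ker, sg_sq]
    norm_num
  · obtain ⟨i, hi⟩ := Function.ne_iff.mp h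
    refine Finset.prod_eq_zero (Finset.mem_univ i) ?_
    revert hi
    cases x i <;> cases y i <;> simp [sg]

lemma T_eq {n : ℕ} (r : Fin n → ℝ) (g : (Fin n → Bool) → ℝ) (x : Fin n → Bool) :
    hcExp n (fun y => g y * ker r x y) = ∑ S : Finset (Fin n), ((∏ i ∈ S, r i) * fcoef n g S) * chi S x := by
  simp only [ker_eq, Finset.mul_sum]
  rw [E_sum]
  refine Finset.sum_congr rfl fun S _ => ?_
  rw [fcoef, mul_assoc, ← E_mulr, ← E_mul]
  congr 1; ext y; ring

lemma inversion {n : ℕ} (g : (Fin n → Bool) → ℝ) (x : Fin n → Bool) :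
    g x = ∑ S : Finset (Fin n), fcoef n g S * chi S x := by
  have := T_eq (fun _ => 1) g x
  simp only [Finset.prod_const_one, one_mul] at this
  rw [← this]
  simp [ker_one, hcExp]

lemma parseval {n : ℕ} (g h : (Fin n → Bool) → ℝ) :
    hcExp n (fun x => g x * h x) = ∑ S : Finset (Fin n), fcoef n g S * fcoef n h S := by
  have : ∀ x, g x * h x = ∑ S : Finset (Fin n), fcoef n g S * (h x * chi S x) := by
    intro x
    nth_rewrite 1 [inversion g x]
    rw [Finset.sum_mul]
    exact Finset.sum_congr rfl fun S _ => by ring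
  simp only [this]
  rw [E_sum]
  exact Finset.sum_congr rfl fun S _ => by rw [E_mul]; rfl

lemma noise {n : ℕ} (r : ℝ) (g : (Fin n → Bool) → ℝ) :
    hcExp n (fun x => hcExp n (fun y => g x * g y * ker (fun _ => r) x y)) =
      ∑ S : Finset (Fin n), r ^ S.card * fcoef n g S ^ 2 := by
  simp only [mul_assoc, E_mul]
  simp only [T_eq, Finset.mul_sum]
  rw [E_sum]
  refine Finset.sum_congr rfl fun S _ => ?_
  rw [sq, ← mul_assoc]
  nth_rewrite 3 [fcoef]
  rw [← E_mul]
  congr 1; ext x; simp; ring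

lemma ortho {n : ℕ} (S T : Finset (Fin n)) :
    hcExp n (fun x => chi S x * chi T x) = if S = T then 1 else 0 := by
  have : ∀ x : Fin n → Bool, chi S x * chi T x =
      ∏ i, ((if i ∈ S then sg (x i) else 1) * (if i ∈ T then sg (x i) else 1)) := by
    intro x
    rw [Finset.prod_mul_distrib]
    simp [chi_eq, Finset.prod_ite_mem]
  simp only [this]
  rw [E_prod (fun i b => (if i ∈ S then sg b else 1) * (if i ∈ T then sg b else 1))]
  split_ifs with h
  · subst h
    refine Finset.prod_eq_one fun i _ => ?_
    split_ifs <;> simp [sg]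
  · have : ∃ i, ¬ (i ∈ S ↔ i ∈ T) := by
      by_contra hc; push Not at hc; exact h (Finset.ext hc)
    obtain ⟨i, hi⟩ := this
    refine Finset.prod_eq_zero (Finset.mem_univ i) ?_
    by_cases h1 : i ∈ S <;> by_cases h2 : i ∈ T <;> simp_all [sg]

lemma fcoef_sum {n : ℕ} (c : Finset (Fin n) → ℝ) (S : Finset (Fin n)) :
    fcoef n (fun x => ∑ T : Finset (Fin n), c T * chi T x) S = c S := by
  simp only [fcoef, Finset.sum_mul, mul_assoc]
  rw [E_sum]
  simp [E_mul, ortho]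

lemma fcoef_T {n : ℕ} (r : Fin n → ℝ) (g : (Fin n → Bool) → ℝ) (S : Finset (Fin n)) :
    fcoef n (fun x => hcExp n (fun y => g y * ker r x y)) S = (∏ i ∈ S, r i) * fcoef n g S := by
  simp only [T_eq]
  exact fcoef_sum (fun S => (∏ i ∈ S, r i) * fcoef n g S) S

lemma T_contract {n : ℕ} {r : Fin n → ℝ} (h0 : ∀ i, 0 ≤ r i) (h1 : ∀ i, r i ≤ 1)
    (g : (Fin n → Bool) → ℝ) :
    hcExp n (fun x => |hcExp n (fun y => g y * ker r x y)|) ≤ hcExp n (fun x => |g x|) := by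
  calc _ ≤ hcExp n (fun x => hcExp n (fun y => |g y| * ker r x y)) := by
        refine E_mono fun x => (E_abs _).trans (le_of_eq ?_)
        congr 1; ext y
        rw [abs_mul, abs_of_nonneg (ker_nonneg h0 h1 x y)]
    _ = _ := by
        rw [E_comm]
        simp only [E_mul, E_ker, mul_one]

lemma chi_flip {n : ℕ} (S : Finset (Fin n)) (i : Fin n) (x : Fin n → Bool) :
    chi S (hcFlip x i) = (if i ∈ S then -1 else 1) * chi S x := by
  simp only [chi_eq]
  split_ifs with h
  · rw [← Finset.mul_prod_erase _ _ h, ← Finset.mul_prod_erase S (fun j => sg (x j)) h, flip_same, sg_not]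
    have : ∏ j ∈ S.erase i, sg (hcFlip x i j) = ∏ j ∈ S.erase i, sg (x j) :=
      Finset.prod_congr rfl fun j hj => by rw [flip_ne _ (Finset.ne_of_mem_erase hj)]
    rw [this]; ring
  · rw [one_mul]
    exact Finset.prod_congr rfl fun j hj => by rw [flip_ne]; rintro rfl; exact h hj

def Dv {n : ℕ} (g : (Fin n → Bool) → ℝ) (i : Fin n) (x : Fin n → Bool) : ℝ :=
  (g x - g (hcFlip x i)) / 2

lemma fcoef_Dv {n : ℕ} (g : (Fin n → Bool) → ℝ) (i : Fin n) (S : Finset (Fin n)) :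
    fcoef n (Dv g i) S = if i ∈ S then fcoef n g S else 0 := by
  have h1 : fcoef n (fun x => g (hcFlip x i)) S = (if i ∈ S then -1 else 1) * fcoef n g S := by
    unfold fcoef
    rw [← E_flip i, ← E_mul]
    congr 1; ext x
    simp only [hcflip_flip, chi_flip]; ring
  have h2 : fcoef n (Dv g i) S = (fcoef n g S - fcoef n (fun x => g (hcFlip x i)) S) / 2 := by
    unfold fcoef Dv
    rw [← E_sub, div_eq_mul_inv, ← E_mulr]
    congr 1; ext x; ring
  rw [h2, h1]
  split_ifs <;> ring

lemma bonami {n : ℕ} (s : Finset (Fin n)) : ∀ (c : Finset (Fin n) → ℝ),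
    hcExp n (fun x => (∑ S ∈ s.powerset, c S * chi S x) ^ 4) ≤
      (∑ S ∈ s.powerset, 3 ^ S.card * c S ^ 2) ^ 2 := by
  induction s using Finset.induction_on with
  | empty =>
    intro c
    simp [chi_eq, E_const]
    ring_nf; rfl
  | insert a s ha ih =>
    intro c
    have hP := ih c
    have hQ := ih (fun S => c (insert a S))
    set P : (Fin n → Bool) → ℝ := fun x => ∑ S ∈ s.powerset, c S * chi S x with hPdef
    set Q : (Fin n → Bool) → ℝ := fun x => ∑ S ∈ s.powerset, c (insert a S) * chi S x with hQdef
    set α := ∑ S ∈ s.powerset, (3:ℝ) ^ S.card * c S ^ 2 with hα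
    set β := ∑ S ∈ s.powerset, (3:ℝ) ^ S.card * c (insert a S) ^ 2 with hβ
    have hα0 : 0 ≤ α := Finset.sum_nonneg fun _ _ => by positivity
    have hβ0 : 0 ≤ β := Finset.sum_nonneg fun _ _ => by positivity
    have hnot : ∀ S ∈ s.powerset, a ∉ S := fun S hS h => ha (Finset.mem_powerset.mp hS h)
    have e1 : ∀ x, ∑ S ∈ (insert a s).powerset, c S * chi S x = P x + sg (x a) * Q x := by
      intro x
      rw [Finset.sum_powerset_insert ha, hPdef, hQdef]
      simp only [Finset.mul_sum]
      congr 1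
      refine Finset.sum_congr rfl fun S hS => ?_
      rw [chi_eq, Finset.prod_insert (hnot S hS), ← chi_eq]; ring
    have e2 : ∑ S ∈ (insert a s).powerset, (3:ℝ) ^ S.card * c S ^ 2 = α + 3 * β := by
      rw [Finset.sum_powerset_insert ha, hα, hβ, Finset.mul_sum]
      congr 1
      refine Finset.sum_congr rfl fun S hS => ?_
      rw [Finset.card_insert_of_notMem (hnot S hS)]; ring
    have fP : ∀ x, P (hcFlip x a) = P x := fun x =>
      Finset.sum_congr rfl fun S hS => by rw [chi_flip, if_neg (hnot S hS), one_mul]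
    have fQ : ∀ x, Q (hcFlip x a) = Q x := fun x =>
      Finset.sum_congr rfl fun S hS => by rw [chi_flip, if_neg (hnot S hS), one_mul]
    simp only [e1, e2]
    have e3 : hcExp n (fun x => (P x + sg (x a) * Q x) ^ 4) =
        hcExp n (fun x => P x ^ 4) + 6 * hcExp n (fun x => P x ^ 2 * Q x ^ 2) + hcExp n (fun x => Q x ^ 4) := by
      have : hcExp n (fun x => (P x + sg (x a) * Q x) ^ 4) =
        (hcExp n (fun x => (P x + sg (x a) * Q x) ^ 4) + hcExp n (fun x => (P x + sg (hcFlip x a a) * Q x) ^ 4)) / 2 := by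
        have := E_flip a (fun x => (P x + sg (x a) * Q x) ^ 4)
        simp only [fP, fQ] at this
        rw [this]; ring
      rw [this, ← E_add, ← E_mul, ← E_add, ← E_add, div_eq_mul_inv, ← E_mulr]
      congr 1; ext x
      rw [flip_same, sg_not]
      have h := sg_sq (x a)
      linear_combination (6 * P x ^ 2 * Q x ^ 2 + Q x ^ 4 * (sg (x a) * sg (x a) + 1)) * h
    have e4 : hcExp n (fun x => P x ^ 2 * Q x ^ 2) ≤ α * β := by
      have h := E_cs (fun x => P x ^ 2) (fun x => Q x ^ 2)
      simp only [← pow_mul] at h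
      refine abs_le_of_sq_le_sq' (h.trans ?_) (by positivity) |>.2
      rw [mul_pow]
      exact mul_le_mul hP hQ (E_nonneg fun x => (by positivity : (0:ℝ) ≤ Q x ^ 4)) (by positivity)
    rw [e3]
    nlinarith [mul_nonneg hα0 hβ0, sq_nonneg β]

lemma hyper {n : ℕ} (F : (Fin n → Bool) → ℝ) :
    ∑ S : Finset (Fin n), ((1:ℝ)/3) ^ S.card * fcoef n F S ^ 2 ≤
      hcExp n (fun x => |F x|) * Real.sqrt (hcExp n (fun x => F x ^ 2)) := by
  set A := ∑ S : Finset (Fin n), ((1:ℝ)/3) ^ S.card * fcoef n F S ^ 2 with hA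
  set a := hcExp n (fun x => |F x|)
  set b := hcExp n (fun x => F x ^ 2)
  have ha : 0 ≤ a := E_nonneg fun x => abs_nonneg _
  have hb : 0 ≤ b := E_nonneg fun x => sq_nonneg _
  have hA0 : 0 ≤ A := Finset.sum_nonneg fun _ _ => by positivity
  set H : (Fin n → Bool) → ℝ := fun x => ∑ S : Finset (Fin n), (((1:ℝ)/3) ^ S.card * fcoef n F S) * chi S x with hH
  have h1 : A = hcExp n (fun x => F x * H x) := by
    rw [parseval, hA]
    refine Finset.sum_congr rfl fun S _ => ?_
    rw [hH, fcoef_sum (fun S => ((1:ℝ)/3) ^ S.card * fcoef n F S)]; ring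
  have h2 : hcExp n (fun x => H x ^ 4) ≤ A ^ 2 := by
    have := bonami (Finset.univ : Finset (Fin n)) (fun S => ((1:ℝ)/3) ^ S.card * fcoef n F S)
    simp only [Finset.powerset_univ] at this
    refine this.trans (le_of_eq ?_)
    congr 1
    refine Finset.sum_congr rfl fun S _ => ?_
    rw [mul_pow, ← mul_assoc, sq (_ ^ _), ← mul_assoc, ← mul_pow]; norm_num
  have h3 : A ^ 2 ≤ a * hcExp n (fun x => |F x| * H x ^ 2) := by
    have h := E_cs (fun x => Real.sqrt |F x|) (fun x => Real.sqrt |F x| * |H x|)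
    simp only [mul_pow, Real.sq_sqrt (abs_nonneg _), sq_abs, ← mul_assoc,
      Real.mul_self_sqrt (abs_nonneg _), ← abs_mul] at h
    refine le_trans ?_ h
    rw [h1, ← sq_abs]
    gcongr
    exact E_abs _
  have h4 : (hcExp n (fun x => |F x| * H x ^ 2)) ^ 2 ≤ b * A ^ 2 := by
    have h := E_cs (fun x => |F x|) (fun x => H x ^ 2)
    simp only [sq_abs, ← pow_mul] at h
    exact h.trans (mul_le_mul_of_nonneg_left h2 hb)
  rcases hA0.eq_or_lt with h | hpos
  · rw [← h]; positivity
  have h5 : (A ^ 2) ^ 2 ≤ a ^ 2 * (b * A ^ 2) := by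
    calc _ ≤ (a * hcExp n (fun x => |F x| * H x ^ 2)) ^ 2 := by gcongr
      _ ≤ _ := by rw [mul_pow]; gcongr
  have h6 : A ^ 2 ≤ a ^ 2 * b := by
    have : A ^ 2 * A ^ 2 ≤ (a ^ 2 * b) * A ^ 2 := by nlinarith
    exact le_of_mul_le_mul_right this (by positivity)
  refine abs_le_of_sq_le_sq' (h6.trans (le_of_eq ?_)) (by positivity) |>.2
  rw [mul_pow, Real.sq_sqrt hb]

lemma E_cross {n : ℕ} (r : ℝ) (y : Fin n → Bool) (j k : Fin n) :
    hcExp n (fun x => (sg (x j) * sg (y j) - r) * (sg (x k) * sg (y k) - r) * ker (fun _ => r) x y) =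
      if j = k then 1 - r ^ 2 else 0 := by
  have : ∀ x : Fin n → Bool, (sg (x j) * sg (y j) - r) * (sg (x k) * sg (y k) - r) * ker (fun _ => r) x y =
      ∏ i, ((if i = j then sg (x i) * sg (y i) - r else 1) * (if i = k then sg (x i) * sg (y i) - r else 1)
        * (1 + r * (sg (x i) * sg (y i)))) := by
    intro x
    rw [Finset.prod_mul_distrib, Finset.prod_mul_distrib]
    simp [ker]
  simp only [this]
  rw [E_prod (fun i b => (if i = j then sg b * sg (y i) - r else 1) * (if i = k then sg b * sg (y i) - r else 1)
        * (1 + r * (sg b * sg (y i))))]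
  split_ifs with h
  · subst h
    rw [Finset.prod_eq_single j]
    · simp only [sg]
      cases y j <;> simp <;> ring
    · intro i _ hi
      simp only [hi, sg]
      cases y i <;> simp <;> ring
    · simp
  · refine Finset.prod_eq_zero (Finset.mem_univ j) ?_
    simp only [h, sg]
    cases y j <;> simp <;> ring

def qd {n : ℕ} (r : ℝ) (x y : Fin n → Bool) (j : Fin n) : ℝ :=
  (∏ i ∈ Finset.univ.erase j, (1 + r * (sg (x i) * sg (y i)))) * (sg (x j) * sg (y j))

lemma qd_ker {n : ℕ} (r : ℝ) (x y : Fin n → Bool) (j : Fin n) :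
    (1 - r ^ 2) * qd r x y j = (sg (x j) * sg (y j) - r) * ker (fun _ => r) x y := by
  unfold qd ker
  rw [← Finset.mul_prod_erase _ _ (Finset.mem_univ j)]
  have h : (sg (x j) * sg (y j)) * (sg (x j) * sg (y j)) = 1 := by
    cases x j <;> cases y j <;> simp [sg]
  linear_combination (-r * ∏ i ∈ Finset.univ.erase j, (1 + r * (sg (x i) * sg (y i)))) * h

lemma qd_flip {n : ℕ} (r : ℝ) (x y : Fin n → Bool) (j : Fin n) :
    qd r x (hcFlip y j) j = - qd r x y j := by
  unfold qd
  have : ∏ i ∈ Finset.univ.erase j, (1 + r * (sg (x i) * sg (hcFlip y j i))) =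
      ∏ i ∈ Finset.univ.erase j, (1 + r * (sg (x i) * sg (y i))) :=
    Finset.prod_congr rfl fun i hi => by rw [flip_ne _ (Finset.ne_of_mem_erase hi)]
  rw [this, flip_same, sg_not]; ring

lemma qd_Dv {n : ℕ} (g : (Fin n → Bool) → ℝ) (r : ℝ) (x : Fin n → Bool) (j : Fin n) :
    hcExp n (fun y => g y * qd r x y j) = hcExp n (fun y => Dv g j y * qd r x y j) := by
  have h1 : hcExp n (fun y => g (hcFlip y j) * qd r x y j) = - hcExp n (fun y => g y * qd r x y j) := by
    rw [← E_flip j, neg_eq_neg_one_mul, ← E_mul]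
    congr 1; ext y
    simp only [hcflip_flip, qd_flip]; ring
  have h2 : hcExp n (fun y => Dv g j y * qd r x y j) =
      (hcExp n (fun y => g y * qd r x y j) - hcExp n (fun y => g (hcFlip y j) * qd r x y j)) / 2 := by
    rw [← E_sub, div_eq_mul_inv, ← E_mulr]
    congr 1; ext y; unfold Dv; ring
  rw [h2, h1]; ring

lemma q_deriv {n : ℕ} (g : (Fin n → Bool) → ℝ) (r : ℝ) :
    HasDerivAt (fun r : ℝ => ∑ S : Finset (Fin n), r ^ S.card * fcoef n g S ^ 2)
      (hcExp n (fun x => hcExp n (fun y => g x * g y * ∑ j, qd r x y j))) r := by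
  simp only [← noise]
  unfold hcExp
  refine HasDerivAt.div_const (HasDerivAt.fun_sum fun x _ => HasDerivAt.div_const
    (HasDerivAt.fun_sum fun y _ => HasDerivAt.const_mul _ ?_) _) _
  unfold ker qd
  have := HasDerivAt.fun_finsetProd (u := (Finset.univ : Finset (Fin n)))
    (f := fun i (r : ℝ) => 1 + r * (sg (x i) * sg (y i))) (f' := fun i => sg (x i) * sg (y i)) (x := r)
    (fun i _ => by
      simpa using ((hasDerivAt_id r).mul_const (sg (x i) * sg (y i))).const_add 1)
  simpa using this

lemma q_deriv_le {n : ℕ} (g : (Fin n → Bool) → ℝ) (hg : ∀ x, |g x| ≤ 1) (r : ℝ) (h0 : 0 ≤ r) (h1 : r < 1) :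
    hcExp n (fun x => hcExp n (fun y => g x * g y * ∑ j, qd r x y j)) ≤
      hcExp n (fun y => Real.sqrt (∑ j, Dv g j y ^ 2)) / Real.sqrt (1 - r) := by
  have hr2 : 0 < 1 - r ^ 2 := by nlinarith
  have e1 : (1 - r ^ 2) * hcExp n (fun x => hcExp n (fun y => g x * g y * ∑ j, qd r x y j)) =
      hcExp n (fun y => hcExp n (fun x => g x * (∑ j, Dv g j y * (sg (x j) * sg (y j) - r)) * ker (fun _ => r) x y)) := by
    rw [E_comm (fun y x => g x * (∑ j, Dv g j y * (sg (x j) * sg (y j) - r)) * ker (fun _ => r) x y), ← E_mul]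
    congr 1; ext x
    have : hcExp n (fun y => g x * g y * ∑ j, qd r x y j) = g x * ∑ j, hcExp n (fun y => Dv g j y * qd r x y j) := by
      simp only [← qd_Dv]
      rw [← E_sum, ← E_mul]
      congr 1; ext y; rw [← Finset.mul_sum]; ring
    rw [this, ← E_sum, ← E_mul, ← E_mul]
    congr 1; ext y
    rw [mul_assoc (g x), mul_left_comm, Finset.mul_sum, Finset.sum_mul]
    congr 1
    refine Finset.sum_congr rfl fun j _ => ?_
    rw [mul_left_comm, qd_ker]; ring
  have e2 : ∀ y, hcExp n (fun x => g x * (∑ j, Dv g j y * (sg (x j) * sg (y j) - r)) * ker (fun _ => r) x y) ≤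
      Real.sqrt (1 - r ^ 2) * Real.sqrt (∑ j, Dv g j y ^ 2) := by
    intro y
    have hk : ∀ x, 0 ≤ ker (fun _ : Fin n => r) x y := fun x => ker_nonneg (fun _ => h0) (fun _ => h1.le) x y
    have h := E_cs (fun x => g x * Real.sqrt (ker (fun _ => r) x y))
      (fun x => (∑ j, Dv g j y * (sg (x j) * sg (y j) - r)) * Real.sqrt (ker (fun _ => r) x y))
    have a1 : hcExp n (fun x => (g x * Real.sqrt (ker (fun _ => r) x y)) ^ 2) ≤ 1 := by
      rw [← E_ker (fun _ => r) y]
      refine E_mono fun x => ?_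
      rw [mul_pow, Real.sq_sqrt (hk x)]
      have : g x ^ 2 ≤ 1 := by rw [← sq_abs]; exact pow_le_one₀ (abs_nonneg _) (hg x)
      exact mul_le_of_le_one_left (hk x) this
    have a2 : hcExp n (fun x => ((∑ j, Dv g j y * (sg (x j) * sg (y j) - r)) * Real.sqrt (ker (fun _ => r) x y)) ^ 2) =
        (1 - r ^ 2) * ∑ j, Dv g j y ^ 2 := by
      have : ∀ x, ((∑ j, Dv g j y * (sg (x j) * sg (y j) - r)) * Real.sqrt (ker (fun _ => r) x y)) ^ 2 =
          ∑ j, ∑ k, (Dv g j y * Dv g k y) *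
            ((sg (x j) * sg (y j) - r) * (sg (x k) * sg (y k) - r) * ker (fun _ => r) x y) := by
        intro x
        rw [mul_pow, Real.sq_sqrt (hk x), sq, Finset.sum_mul_sum, Finset.sum_mul]
        refine Finset.sum_congr rfl fun j _ => ?_
        rw [Finset.sum_mul]
        exact Finset.sum_congr rfl fun k _ => by ring
      simp only [this]
      rw [E_sum, Finset.mul_sum]
      refine Finset.sum_congr rfl fun j _ => ?_
      rw [E_sum]
      simp only [E_mul, E_cross]
      simp; ring
    rw [a2] at h
    rw [← Real.sqrt_mul hr2.le]
    refine Real.le_sqrt_of_sq_le ?_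
    have e : (fun x => g x * (∑ j, Dv g j y * (sg (x j) * sg (y j) - r)) * ker (fun _ => r) x y) =
        (fun x => (g x * Real.sqrt (ker (fun _ => r) x y)) *
          ((∑ j, Dv g j y * (sg (x j) * sg (y j) - r)) * Real.sqrt (ker (fun _ => r) x y))) := by
      ext x
      have := Real.mul_self_sqrt (hk x)
      linear_combination (-(g x * (∑ j, Dv g j y * (sg (x j) * sg (y j) - r)))) * this
    rw [e]
    refine h.trans (mul_le_of_le_one_left (mul_nonneg hr2.le (Finset.sum_nonneg fun _ _ => sq_nonneg _)) a1)
  have e3 := E_mono e2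
  rw [← e1, E_mul] at e3
  set X := hcExp n (fun x => hcExp n (fun y => g x * g y * ∑ j, qd r x y j))
  set M := hcExp n (fun y => Real.sqrt (∑ j, Dv g j y ^ 2))
  have hM : 0 ≤ M := E_nonneg fun x => Real.sqrt_nonneg _
  have hs : 0 < Real.sqrt (1 - r ^ 2) := Real.sqrt_pos.mpr hr2
  have h4 : X ≤ M / Real.sqrt (1 - r ^ 2) := by
    rw [le_div_iff₀ hs]
    have h := Real.mul_self_sqrt hr2.le
    have e3' : Real.sqrt (1 - r ^ 2) * (Real.sqrt (1 - r ^ 2) * X) ≤ Real.sqrt (1 - r ^ 2) * M := by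
      rw [← mul_assoc, h]; exact e3
    have := le_of_mul_le_mul_left e3' hs
    linarith
  refine h4.trans ?_
  have : 0 < Real.sqrt (1 - r) := Real.sqrt_pos.mpr (by linarith)
  refine div_le_div_of_nonneg_left hM this (Real.sqrt_le_sqrt (by nlinarith))

lemma noise_le {n : ℕ} (g : (Fin n → Bool) → ℝ) (hg : ∀ x, |g x| ≤ 1) (ρ : ℝ) (h0 : 0 ≤ ρ) (h1 : ρ ≤ 1) :
    ∑ S : Finset (Fin n), (1 - ρ ^ S.card) * fcoef n g S ^ 2 ≤
      2 * hcExp n (fun y => Real.sqrt (∑ j, Dv g j y ^ 2)) * Real.sqrt (1 - ρ) := by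
  set M := hcExp n (fun y => Real.sqrt (∑ j, Dv g j y ^ 2))
  have hd : ∀ r : ℝ, r < 1 → HasDerivAt (fun r : ℝ => ∑ S : Finset (Fin n), r ^ S.card * fcoef n g S ^ 2
      + 2 * M * Real.sqrt (1 - r)) (hcExp n (fun x => hcExp n (fun y => g x * g y * ∑ j, qd r x y j)) +
        2 * M * ((-1) / (2 * Real.sqrt (1 - r)))) r := by
    intro r hr
    rw [show (fun r : ℝ => ∑ S : Finset (Fin n), (r ^ S.card * fcoef n g S ^ 2)
      + 2 * M * Real.sqrt (1 - r)) = fun r : ℝ => (∑ S : Finset (Fin n), r ^ S.card * fcoef n g S ^ 2)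
      + 2 * M * Real.sqrt (1 - r) from rfl]
    refine (q_deriv g r).add (HasDerivAt.const_mul _ ?_)
    exact HasDerivAt.sqrt ((hasDerivAt_id r).const_sub 1) (by simp; linarith)
  have hanti : AntitoneOn (fun r : ℝ => ∑ S : Finset (Fin n), r ^ S.card * fcoef n g S ^ 2
      + 2 * M * Real.sqrt (1 - r)) (Set.Icc 0 1) := by
    refine antitoneOn_of_deriv_nonpos (convex_Icc 0 1) (by fun_prop) ?_ ?_
    · intro r hr
      rw [interior_Icc] at hr
      exact (hd r hr.2).differentiableAt.differentiableWithinAt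
    · intro r hr
      rw [interior_Icc] at hr
      rw [(hd r hr.2).deriv]
      have h := q_deriv_le g hg r hr.1.le hr.2
      have hs : 0 < Real.sqrt (1 - r) := Real.sqrt_pos.mpr (by linarith [hr.2])
      have : 2 * M * ((-1) / (2 * Real.sqrt (1 - r))) = - (M / Real.sqrt (1 - r)) := by
        field_simp
      rw [this]; linarith
  have := hanti ⟨h0, h1⟩ ⟨zero_le_one, le_rfl⟩ h1
  simp only [one_pow, one_mul, sub_self, Real.sqrt_zero, mul_zero, add_zero] at this
  simp only [sub_mul, one_mul, Finset.sum_sub_distrib]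
  linarith

lemma toReal_abs {n : ℕ} (f : (Fin n → Bool) → Bool) (x : Fin n → Bool) : |toReal f x| ≤ 1 := by
  unfold toReal; split_ifs <;> simp

lemma Dv_sq {n : ℕ} (f : (Fin n → Bool) → Bool) (x : Fin n → Bool) (i : Fin n) :
    Dv (toReal f) i x ^ 2 = if f (hcFlip x i) ≠ f x then 1 / 4 else 0 := by
  unfold Dv toReal
  cases f x <;> cases f (hcFlip x i) <;> norm_num

lemma Dv_abs {n : ℕ} (f : (Fin n → Bool) → Bool) (x : Fin n → Bool) (i : Fin n) :
    |Dv (toReal f) i x| = (if f (hcFlip x i) = f x then 0 else 1) * (1 / 2) := by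
  unfold Dv toReal
  cases f x <;> cases f (hcFlip x i) <;> norm_num [abs_of_pos, abs_of_neg]

lemma E_Dv_abs {n : ℕ} (f : (Fin n → Bool) → Bool) (i : Fin n) :
    hcExp n (fun x => |Dv (toReal f) i x|) = influence n f i * (1 / 2) := by
  simp only [Dv_abs, E_mulr]; rfl

lemma grad_sens {n : ℕ} (f : (Fin n → Bool) → Bool) :
    2 * hcExp n (fun y => Real.sqrt (∑ j, Dv (toReal f) j y ^ 2)) =
      hcExp n (fun x => Real.sqrt (sens f x)) := by
  rw [← E_mul]
  congr 1; ext x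
  have : ∑ j, Dv (toReal f) j x ^ 2 = (sens f x : ℝ) * (1 / 2) ^ 2 := by
    simp only [Dv_sq, sens, ← Finset.sum_filter, Finset.sum_const, nsmul_eq_mul]
    norm_num
  rw [this, Real.sqrt_mul (by positivity), Real.sqrt_sq (by norm_num)]; ring

lemma toReal_sq {n : ℕ} (f : (Fin n → Bool) → Bool) (x : Fin n → Bool) :
    toReal f x * toReal f x = toReal f x := by
  unfold toReal; split_ifs <;> simp

lemma fcoef_empty {n : ℕ} (g : (Fin n → Bool) → ℝ) : fcoef n g ∅ = hcExp n g := by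
  simp [fcoef, chi_eq]

lemma var_eq {n : ℕ} (f : (Fin n → Bool) → Bool) :
    hcVar n f = ∑ S ∈ Finset.univ.erase (∅ : Finset (Fin n)), fcoef n (toReal f) S ^ 2 := by
  have h := parseval (toReal f) (toReal f)
  simp only [toReal_sq] at h
  rw [← Finset.add_sum_erase _ _ (Finset.mem_univ ∅), fcoef_empty] at h
  change hcExp n (toReal f) = _ at h
  unfold hcVar
  simp only [sq]
  linarith

lemma L_bound2 {n : ℕ} (f : (Fin n → Bool) → Bool) :
    ∑ S ∈ Finset.univ.erase (∅ : Finset (Fin n)), ((1:ℝ)/6) ^ S.card * fcoef n (toReal f) S ^ 2 ≤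
      2 * hcVar n f * Real.sqrt (hcVar n f) := by
  set μ := hcExp n (toReal f) with hμ
  have hμ0 : 0 ≤ μ := E_nonneg fun x => by unfold toReal; split_ifs <;> simp
  have hμ1 : μ ≤ 1 := by
    have : μ ≤ hcExp n (fun _ => 1) := E_mono fun x => by unfold toReal; split_ifs <;> simp
    rwa [E_const] at this
  have h := hyper (fun x => toReal f x - μ)
  have h1 : hcExp n (fun x => |toReal f x - μ|) = 2 * hcVar n f := by
    have : ∀ x, |toReal f x - μ| = (1 - 2 * μ) * toReal f x + μ := by
      intro x; unfold toReal
      split_ifs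
      · rw [abs_of_nonneg (by linarith)]; ring
      · rw [abs_of_nonpos (by linarith)]; ring
    simp only [this]
    rw [E_add, E_mul, E_const, hcVar, ← hμ]; ring
  have h2 : hcExp n (fun x => (toReal f x - μ) ^ 2) = hcVar n f := by
    have : ∀ x, (toReal f x - μ) ^ 2 = (1 - 2 * μ) * toReal f x + μ ^ 2 := by
      intro x
      have := toReal_sq f x
      linear_combination this
    simp only [this]
    rw [E_add, E_mul, E_const, hcVar, ← hμ]; ring
  rw [h1, h2] at h
  refine le_trans ?_ h
  calc _ ≤ ∑ S ∈ Finset.univ.erase (∅ : Finset (Fin n)), ((1:ℝ)/3) ^ S.card *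
        fcoef n (fun x => toReal f x - μ) S ^ 2 := by
        refine Finset.sum_le_sum fun S hS => ?_
        have e : fcoef n (fun x => toReal f x - μ) S = fcoef n (toReal f) S := by
          have hne : S ≠ ∅ := Finset.ne_of_mem_erase hS
          have h0 := ortho S ∅
          rw [if_neg hne] at h0
          simp only [chi_eq, Finset.prod_empty, mul_one] at h0
          unfold fcoef
          simp only [sub_mul]
          rw [E_sub, E_mul]
          change hcExp n (chi S) = 0 at h0
          rw [h0]; ring
        rw [e]
        gcongr
        norm_num
    _ ≤ _ := Finset.sum_le_sum_of_subset_of_nonneg (Finset.subset_univ _) fun _ _ _ => by positivity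

lemma L_bound1_aux {n : ℕ} (f : (Fin n → Bool) → Bool) (I : Finset (Fin n)) :
    ∑ i, ∑ S : Finset (Fin n), (if S ∩ I = {i} then ((1:ℝ)/3) ^ S.card * fcoef n (toReal f) S ^ 2 else 0) ≤
      1 / 2 * (Real.sqrt (∑ i, influence n f i ^ 2) * Real.sqrt (hcVar n f)) := by
  have step : ∀ i, ∑ S : Finset (Fin n), (if S ∩ I = {i} then ((1:ℝ)/3) ^ S.card * fcoef n (toReal f) S ^ 2 else 0) ≤
      1 / 2 * (influence n f i * Real.sqrt (∑ S : Finset (Fin n), if S ∩ I = {i} then fcoef n (toReal f) S ^ 2 else 0)) := by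
    intro i
    have hinf : 0 ≤ influence n f i := E_nonneg fun x => by split_ifs <;> simp
    by_cases hi : i ∈ I
    · set r : Fin n → ℝ := fun k => if k ∈ I.erase i then 0 else 1 with hr
      have hr0 : ∀ k, 0 ≤ r k := fun k => by simp only [hr]; split_ifs <;> simp
      have hr1 : ∀ k, r k ≤ 1 := fun k => by simp only [hr]; split_ifs <;> simp
      have hc : ∀ S, fcoef n (fun x => hcExp n (fun y => Dv (toReal f) i y * ker r x y)) S =
          if S ∩ I = {i} then fcoef n (toReal f) S else 0 := by
        intro S
        rw [fcoef_T, fcoef_Dv]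
        split_ifs with h1 h2 h2
        · rw [Finset.prod_eq_one, one_mul]
          intro k hk
          simp only [hr]
          rw [if_neg]
          intro hk2
          have : k ∈ S ∩ I := Finset.mem_inter.mpr ⟨hk, Finset.mem_of_mem_erase hk2⟩
          rw [h2, Finset.mem_singleton] at this
          exact Finset.ne_of_mem_erase hk2 this
        · have : ∃ k ∈ S, k ∈ I.erase i := by
            by_contra hcon
            push Not at hcon
            apply h2
            ext k
            simp only [Finset.mem_inter, Finset.mem_singleton]
            constructor
            · rintro ⟨a, b⟩
              by_contra hne
              exact hcon k a (Finset.mem_erase.mpr ⟨hne, b⟩)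
            · rintro rfl; exact ⟨h1, hi⟩
          obtain ⟨k, hk, hk2⟩ := this
          rw [Finset.prod_eq_zero hk, zero_mul]
          simp only [hr]; rw [if_pos hk2]
        · exfalso
          have : i ∈ S ∩ I := by rw [h2]; simp
          exact h1 (Finset.mem_inter.mp this).1
        · simp
      have h := hyper (fun x => hcExp n (fun y => Dv (toReal f) i y * ker r x y))
      have hp := parseval (fun x => hcExp n (fun y => Dv (toReal f) i y * ker r x y))
        (fun x => hcExp n (fun y => Dv (toReal f) i y * ker r x y))
      simp only [← sq] at hp
      rw [hp] at h
      simp only [hc, ite_pow] at h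
      have hT := T_contract hr0 hr1 (Dv (toReal f) i)
      rw [E_Dv_abs] at hT
      have h' := h.trans (mul_le_mul_of_nonneg_right hT (Real.sqrt_nonneg _))
      simp only [mul_ite, ne_eq, OfNat.ofNat_ne_zero, not_false_eq_true, zero_pow, mul_zero] at h'
      linarith
    · rw [Finset.sum_eq_zero]
      · positivity
      · intro S _
        rw [if_neg]
        intro h
        have : i ∈ S ∩ I := by rw [h]; simp
        exact hi (Finset.mem_inter.mp this).2
  refine (Finset.sum_le_sum fun i _ => step i).trans ?_
  rw [← Finset.mul_sum]
  refine mul_le_mul_of_nonneg_left ?_ (by norm_num)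
  refine (Real.sum_mul_le_sqrt_mul_sqrt _ _ _).trans ?_
  refine mul_le_mul_of_nonneg_left (Real.sqrt_le_sqrt ?_) (Real.sqrt_nonneg _)
  have hnn : ∀ i, 0 ≤ ∑ S : Finset (Fin n), if S ∩ I = {i} then fcoef n (toReal f) S ^ 2 else 0 := fun i =>
    Finset.sum_nonneg fun S _ => by split_ifs <;> positivity
  simp only [Real.sq_sqrt (hnn _)]
  rw [Finset.sum_comm, var_eq, ← Finset.sum_erase (s := Finset.univ) (a := (∅ : Finset (Fin n)))]
  · refine Finset.sum_le_sum fun S _ => ?_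
    by_cases h : ∃ i, S ∩ I = {i}
    · obtain ⟨i, hi⟩ := h
      rw [hi]
      simp
    · push Not at h
      simp only [h]
      simp
      positivity
  · refine Finset.sum_eq_zero fun i _ => ?_
    rw [if_neg]
    simp

lemma L_bound1 {n : ℕ} (f : (Fin n → Bool) → Bool) :
    ∑ S ∈ Finset.univ.erase (∅ : Finset (Fin n)), ((1:ℝ)/6) ^ S.card * fcoef n (toReal f) S ^ 2 ≤
      1 / 2 * (Real.sqrt (∑ i, influence n f i ^ 2) * Real.sqrt (hcVar n f)) := by
  set B := 1 / 2 * (Real.sqrt (∑ i, influence n f i ^ 2) * Real.sqrt (hcVar n f))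
  have h := Finset.sum_le_sum fun (I : Finset (Fin n)) (_ : I ∈ Finset.univ) => L_bound1_aux f I
  rw [Finset.sum_const, Finset.card_univ, Fintype.card_finset, Fintype.card_fin, nsmul_eq_mul] at h
  push_cast at h
  refine le_of_mul_le_mul_left (le_trans ?_ h) (by positivity : (0:ℝ) < 2 ^ n)
  have e : ∑ I : Finset (Fin n), ∑ i, ∑ S : Finset (Fin n),
      (if S ∩ I = {i} then ((1:ℝ)/3) ^ S.card * fcoef n (toReal f) S ^ 2 else 0) =
      ∑ S : Finset (Fin n), ∑ i, ∑ I : Finset (Fin n),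
      (if S ∩ I = {i} then ((1:ℝ)/3) ^ S.card * fcoef n (toReal f) S ^ 2 else 0) := by
    rw [Finset.sum_comm]
    rw [Finset.sum_congr rfl fun i _ => Finset.sum_comm]
    rw [Finset.sum_comm]
  rw [e, Finset.mul_sum]
  refine le_trans ?_ (Finset.sum_le_sum_of_subset_of_nonneg (Finset.subset_univ (Finset.univ.erase ∅))
    fun S _ _ => Finset.sum_nonneg fun i _ => Finset.sum_nonneg fun I _ => by split_ifs <;> positivity)
  refine Finset.sum_le_sum fun S hS => ?_
  obtain ⟨i, hi⟩ := Finset.nonempty_iff_ne_empty.mpr (Finset.ne_of_mem_erase hS)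
  refine le_trans ?_ (Finset.single_le_sum (f := fun i => ∑ I : Finset (Fin n),
      (if S ∩ I = {i} then ((1:ℝ)/3) ^ S.card * fcoef n (toReal f) S ^ 2 else 0))
      (fun i _ => Finset.sum_nonneg fun I _ => by split_ifs <;> positivity) (Finset.mem_univ i))
  rw [← Finset.sum_filter, Finset.sum_const, nsmul_eq_mul]
  have hcard : 2 ^ (n - S.card) ≤ (Finset.univ.filter fun I : Finset (Fin n) => S ∩ I = {i}).card := by
    have : (Sᶜ).powerset.card = 2 ^ (n - S.card) := by
      rw [Finset.card_powerset, Finset.card_compl, Fintype.card_fin]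
    rw [← this]
    refine Finset.card_le_card_of_injOn (fun J => insert i J) ?_ ?_
    · intro J hJ
      have hJ' : J ⊆ Sᶜ := Finset.mem_powerset.mp hJ
      simp only [Finset.coe_filter, Finset.mem_univ, true_and, Set.mem_setOf_eq]
      ext k
      simp only [Finset.mem_inter, Finset.mem_insert, Finset.mem_singleton]
      constructor
      · rintro ⟨a, b | b⟩
        · exact b
        · exact absurd a (Finset.mem_compl.mp (hJ' b))
      · rintro rfl; exact ⟨hi, Or.inl rfl⟩
    · intro J hJ J' hJ' heq
      have n1 : i ∉ J := fun hh => Finset.mem_compl.mp (Finset.mem_powerset.mp hJ hh) hi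
      have n2 : i ∉ J' := fun hh => Finset.mem_compl.mp (Finset.mem_powerset.mp hJ' hh) hi
      simp only at heq
      rw [← Finset.erase_insert n1, heq, Finset.erase_insert n2]
  have hcard' : (2:ℝ) ^ n * (1 / 2) ^ S.card ≤ (Finset.univ.filter fun I : Finset (Fin n) => S ∩ I = {i}).card := by
    have hle : S.card ≤ n := by simpa using Finset.card_le_univ S
    have : (2:ℝ) ^ n * (1 / 2) ^ S.card = 2 ^ (n - S.card) := by
      rw [one_div, inv_pow, pow_sub₀ _ two_ne_zero hle]
    rw [this]
    exact_mod_cast hcard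
  calc (2:ℝ) ^ n * ((1 / 6) ^ S.card * fcoef n (toReal f) S ^ 2)
      = (2 ^ n * (1 / 2) ^ S.card) * ((1 / 3) ^ S.card * fcoef n (toReal f) S ^ 2) := by
        rw [show (1:ℝ)/6 = (1/2) * (1/3) by norm_num, mul_pow]; ring
    _ ≤ _ := by gcongr

lemma key {n : ℕ} (f : (Fin n → Bool) → Bool) (d : ℝ) (hd : 0 < d) :
    hcVar n f ≤ hcExp n (fun x => Real.sqrt (sens f x)) * Real.sqrt (1 / d) + Real.exp (-1) * hcVar n f +
      Real.exp (2 * d) * ∑ S ∈ Finset.univ.erase (∅ : Finset (Fin n)), ((1:ℝ)/6) ^ S.card * fcoef n (toReal f) S ^ 2 := by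
  set M := hcExp n (fun x => Real.sqrt (sens f x))
  have hM : 0 ≤ M := E_nonneg fun x => Real.sqrt_nonneg _
  have h := noise_le (toReal f) (toReal_abs f) (Real.exp (-(1 / d))) (Real.exp_pos _).le
    (Real.exp_le_one_iff.mpr (by rw [neg_nonpos]; positivity))
  rw [grad_sens] at h
  have h1 : M * Real.sqrt (1 - Real.exp (-(1 / d))) ≤ M * Real.sqrt (1 / d) := by
    gcongr
    have := Real.add_one_le_exp (-(1/d)); linarith
  have h2 := h.trans h1
  rw [← Finset.add_sum_erase _ _ (Finset.mem_univ ∅)] at h2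
  simp only [Finset.card_empty, pow_zero, sub_self, zero_mul, zero_add] at h2
  rw [var_eq]
  have h3 : ∑ S ∈ Finset.univ.erase (∅ : Finset (Fin n)), fcoef n (toReal f) S ^ 2 ≤
      ∑ S ∈ Finset.univ.erase (∅ : Finset (Fin n)), ((1 - Real.exp (-(1 / d)) ^ S.card) * fcoef n (toReal f) S ^ 2 +
        Real.exp (-1) * fcoef n (toReal f) S ^ 2 +
        Real.exp (2 * d) * (((1:ℝ)/6) ^ S.card * fcoef n (toReal f) S ^ 2)) := by
    refine Finset.sum_le_sum fun S _ => ?_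
    have hk : Real.exp (-(1 / d)) ^ S.card ≤ Real.exp (-1) + Real.exp (2 * d) * (1/6) ^ S.card := by
      rcases le_total d S.card with hc | hc
      · have : Real.exp (-(1 / d)) ^ S.card ≤ Real.exp (-1) := by
          rw [← Real.exp_nat_mul]
          apply Real.exp_le_exp.mpr
          have : 1 ≤ (S.card : ℝ) * (1 / d) := by
            rw [mul_one_div, le_div_iff₀ hd]; linarith
          linarith
        have : 0 ≤ Real.exp (2 * d) * (1/6) ^ S.card := by positivity
        linarith
      · have a : Real.exp (-(1 / d)) ^ S.card ≤ 1 := pow_le_one₀ (Real.exp_pos _).le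
          (Real.exp_le_one_iff.mpr (by rw [neg_nonpos]; positivity))
        have b : 1 ≤ Real.exp (2 * d) * (1/6) ^ S.card := by
          have h6 : (6:ℝ) ≤ Real.exp 2 := by
            have := Real.exp_one_gt_d9
            have e : Real.exp 2 = Real.exp 1 * Real.exp 1 := by rw [← Real.exp_add]; norm_num
            rw [e]; nlinarith
          have : (6:ℝ) ^ S.card ≤ Real.exp (2 * d) := by
            calc (6:ℝ) ^ S.card ≤ Real.exp 2 ^ S.card := by gcongr
              _ = Real.exp (S.card * 2) := by rw [← Real.exp_nat_mul]
              _ ≤ _ := Real.exp_le_exp.mpr (by linarith)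
          rw [one_div, inv_pow, ← div_eq_mul_inv, le_div_iff₀ (by positivity)]
          linarith
        linarith [Real.exp_pos (-1)]
    nlinarith [mul_le_mul_of_nonneg_right hk (sq_nonneg (fcoef n (toReal f) S))]
  rw [Finset.sum_add_distrib, Finset.sum_add_distrib, ← Finset.mul_sum, ← Finset.mul_sum] at h3
  linarith

lemma var_le {n : ℕ} (f : (Fin n → Bool) → Bool) :
    hcVar n f ≤ hcExp n (fun x => Real.sqrt (sens f x)) := by
  have h := noise_le (toReal f) (toReal_abs f) 0 le_rfl zero_le_one
  rw [grad_sens, ← Finset.add_sum_erase _ _ (Finset.mem_univ ∅)] at h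
  simp only [Finset.card_empty, pow_zero, sub_self, zero_mul, zero_add, sub_zero, Real.sqrt_one, mul_one] at h
  rw [var_eq]
  refine le_trans (Finset.sum_le_sum fun S hS => ?_) h
  have : S.card ≠ 0 := by
    rw [Finset.card_ne_zero]
    exact Finset.nonempty_iff_ne_empty.mpr (Finset.ne_of_mem_erase hS)
  rw [zero_pow this]; simp

theorem eldan_gross_isoperimetry :
    ∃ c : ℝ, 0 < c ∧ ∀ (n : ℕ) (f : (Fin n → Bool) → Bool), 0 < hcVar n f →
      hcExp n (fun x => Real.sqrt (sens f x)) ≥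
        c * hcVar n f * Real.sqrt (Real.log (1 + 1 / ∑ i, (influence n f i) ^ 2)) := by
  refine ⟨1 / 20, by norm_num, fun n f hv => ?_⟩
  have hkey := key f
  have hvar := var_le f
  have hL1 := L_bound1 f
  have hL2 := L_bound2 f
  set v := hcVar n f
  set M := hcExp n (fun x => Real.sqrt (sens f x))
  set W := ∑ i, influence n f i ^ 2
  set L := ∑ S ∈ Finset.univ.erase (∅ : Finset (Fin n)), ((1:ℝ)/6) ^ S.card * fcoef n (toReal f) S ^ 2
  have hL0 : 0 ≤ L := Finset.sum_nonneg fun _ _ => by positivity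
  have hW0 : 0 ≤ W := Finset.sum_nonneg fun _ _ => by positivity
  have hM : v ≤ M := hvar
  rcases hW0.eq_or_lt with hW | hW
  · rw [← hW]; simp; linarith
  set l := Real.log (1 / W) with hl
  have hWl : 1 / W = Real.exp l := by rw [hl, Real.exp_log (by positivity)]
  have hWl' : W = Real.exp (-l) := by rw [Real.exp_neg, ← hWl]; simp
  have hlog : ∀ m : ℝ, 0 ≤ m → l ≤ m → Real.log (1 + 1 / W) ≤ m + 1 := by
    intro m hm0 hm
    rw [Real.log_le_iff_le_exp (by positivity), hWl, Real.exp_add]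
    have h1 := Real.exp_le_exp.mpr hm
    have h2 := Real.one_le_exp hm0
    have h3 := Real.exp_one_gt_d9
    nlinarith
  rcases le_total 16 l with h16 | h16
  · have hLv : L ≤ v * Real.exp (-(l / 4)) := by
      refine abs_le_of_sq_le_sq' ?_ (by positivity) |>.2
      have hsW : Real.sqrt W = Real.exp (-(l / 2)) := by
        rw [Real.sqrt_eq_iff_mul_self_eq hW0 (Real.exp_pos _).le, ← Real.exp_add, hWl']
        congr 1; ring
      have he : Real.exp (-(l / 4)) ^ 2 = Real.exp (-(l / 2)) := by
        rw [← Real.exp_nat_mul]; congr 1; push_cast; ring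
      have hsv := Real.mul_self_sqrt hv.le
      calc L ^ 2 = L * L := sq L
        _ ≤ (1 / 2 * (Real.sqrt W * Real.sqrt v)) * (2 * v * Real.sqrt v) :=
          mul_le_mul hL1 hL2 hL0 (by positivity)
        _ = v * (Real.sqrt v * Real.sqrt v) * Real.sqrt W := by ring
        _ = _ := by rw [hsv, hsW, mul_pow, he]; ring
    have hk := hkey (l / 16) (by linarith)
    have hexp : Real.exp (2 * (l / 16)) * L ≤ Real.exp (-2) * v := by
      calc _ ≤ Real.exp (2 * (l / 16)) * (v * Real.exp (-(l / 4))) := by gcongr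
        _ = Real.exp (-(l / 8)) * v := by
          rw [mul_left_comm, ← Real.exp_add, mul_comm]; congr 2; ring
        _ ≤ _ := by gcongr; linarith
    have hs : 0 < Real.sqrt l := Real.sqrt_pos.mpr (by linarith)
    have hsq : Real.sqrt (1 / (l / 16)) = 4 / Real.sqrt l := by
      rw [show 1 / (l / 16) = 4 ^ 2 / l by field_simp; norm_num, Real.sqrt_div (by norm_num),
        Real.sqrt_sq (by norm_num)]
    rw [hsq] at hk
    have he1 : Real.exp (-1) ≤ 0.37 := by
      have := Real.exp_neg_one_lt_d9; linarith
    have he2 : Real.exp (-2) ≤ 0.37 * 0.37 := by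
      rw [show (-2:ℝ) = -1 + -1 by norm_num, Real.exp_add]
      gcongr
    have h1 : 0.4 * v ≤ M * (4 / Real.sqrt l) := by nlinarith
    have h2 : 0.1 * v * Real.sqrt l ≤ M := by
      have := mul_le_mul_of_nonneg_right h1 hs.le
      rw [mul_assoc M, div_mul_cancel₀ _ hs.ne'] at this
      linarith
    have h3 : Real.sqrt (Real.log (1 + 1 / W)) ≤ 2 * Real.sqrt l := by
      rw [show 2 * Real.sqrt l = Real.sqrt (2 ^ 2 * l) by
        rw [Real.sqrt_mul (by norm_num), Real.sqrt_sq (by norm_num)]]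
      apply Real.sqrt_le_sqrt
      have := hlog l (by linarith) le_rfl
      linarith
    have := mul_le_mul_of_nonneg_left h3 (by positivity : 0 ≤ 1 / 20 * v)
    linarith
  · have h3 : Real.sqrt (Real.log (1 + 1 / W)) ≤ 5 := by
      rw [Real.sqrt_le_left (by norm_num)]
      have := hlog 16 (by norm_num) h16
      linarith
    have := mul_le_mul_of_nonneg_left h3 (by positivity : 0 ≤ 1 / 20 * v)
    linarith

end
end
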